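/- For every integer n ≥ 4, the cyclic matching sequencibility of K_n equals the matching sequencibility of K_n if n is even, and equals the matching sequencibility of K_n minus 1 if n is odd. -/

import Mathlib

/-- Two edges of a graph (as unordered pairs of vertices) are *disjoint*
if they share no vertex. -/
def edgesDisjoint {V : Type*} (e₁ e₂ : Sym2 V) : Prop :=
  ∀ v : V, v ∈ e₁ → v ∉ e₂

/-- The number of edges of a graph `G`. -/
noncomputable def edgeCount {V : Type*} (G : SimpleGraph V) : ℕ :=
  Nat.card G.edgeSet

/-- A linear ordering `f` of the edges of `G` has matching number at least `d`
if every `d` consecutive edges in the ordering are pairwise disjoint. -/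
def LinearGood {V : Type*} (G : SimpleGraph V)
    (f : Fin (edgeCount G) ≃ G.edgeSet) (d : ℕ) : Prop :=
  ∀ j k : Fin (edgeCount G), j ≠ k → (j : ℕ) < (k : ℕ) + d → (k : ℕ) < (j : ℕ) + d →
    edgesDisjoint (f j : Sym2 V) (f k : Sym2 V)

/-- The matching sequencibility `ms G`: the largest `d` (necessarily at most the
number of edges) for which some linear ordering of the edges of `G` has every
`d` consecutive edges forming a matching. -/
noncomputable def ms {V : Type*} (G : SimpleGraph V) : ℕ :=
  sSup {d : ℕ | d ≤ edgeCount G ∧ ∃ f : Fin (edgeCount G) ≃ G.edgeSet, LinearGood G f d}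

/-- A cyclic ordering `f : ZMod N ≃ edges of G` has cyclic matching number at least `d`
if every `d` cyclically consecutive edges in the ordering are pairwise disjoint. -/
def CyclicGood {V : Type*} (G : SimpleGraph V) {N : ℕ}
    (f : ZMod N ≃ G.edgeSet) (d : ℕ) : Prop :=
  ∀ (i : ZMod N) (j k : ℕ), j < d → k < d → j ≠ k →
    edgesDisjoint (f (i + (j : ZMod N)) : Sym2 V) (f (i + (k : ZMod N)) : Sym2 V)

/-- The cyclic matching sequencibility `cms G`: the largest `d` for which some
cyclic ordering of the edges of `G` has every `d` cyclically consecutive edges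
forming a matching. -/
noncomputable def cms {V : Type*} (G : SimpleGraph V) : ℕ :=
  sSup {d : ℕ | ∃ f : ZMod (edgeCount G) ≃ G.edgeSet, CyclicGood G f d}

/-!
For `n ≥ 4` vertices both parameters are determined: `ms Kₙ = (n - 1) / 2` and
`cms Kₙ = n / 2 - 1`, with divisions rounded down.

If `2 * d ≥ n`, then an endpoint of the first of `d + 1` consecutive edges can only be covered again
by the last one, so these two edges coincide; this bounds `ms`, hence also `cms`.

For `n = 2 * k + 1` the cyclic bound is smaller by one. If any `k` cyclically consecutive edges were
disjoint, every vertex would recur after `k` or `k + 1` steps. The two endpoints of an edge do not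
meet again within a period and occur equally often in it, which rules out two consecutive gaps of
length `k` at a vertex. Comparing neighbouring edges then also rules out two consecutive gaps of
length `k + 1`, so every vertex recurs after `2 * k + 1` steps and an edge is repeated too early.

The orderings attaining the bounds arise by rotating the family of parallel chords of a regular
polygon, with its centre added for even `n`, and for `ms` and odd `n` from Walecki's zigzag
Hamiltonian cycles.
-/

open Finset

section Edges

variable {V W : Type*}

lemma edgesDisjoint.symm {z w : Sym2 V} (h : edgesDisjoint z w) : edgesDisjoint w z :=
  fun v hw hz => h v hz hw

lemma edgesDisjoint_mk {a b c d : V} :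
    edgesDisjoint s(a, b) s(c, d) ↔ a ≠ c ∧ a ≠ d ∧ b ≠ c ∧ b ≠ d := by
  simp [edgesDisjoint, and_assoc]

lemma edgesDisjoint_map {φ : V → W} (hφ : φ.Injective) {z w : Sym2 V} :
    edgesDisjoint (z.map φ) (w.map φ) ↔ edgesDisjoint z w := by
  simp only [edgesDisjoint, Sym2.mem_map, forall_exists_index, and_imp, forall_apply_eq_imp_iff₂,
    hφ.eq_iff, not_exists, not_and]
  exact ⟨fun h v hz hw => h v hz v hw rfl, fun h v hz w hw hwv => h v hz (hwv ▸ hw)⟩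

lemma eq_of_not_isDiag_of_forall_mem {z w : Sym2 V} (hz : ¬z.IsDiag) (h : ∀ v ∈ z, v ∈ w) :
    z = w := by
  induction z with
  | h x y =>
    exact Sym2.eq_of_ne_mem hz (Sym2.mem_mk_left x y) (Sym2.mem_mk_right x y)
      (h x (Sym2.mem_mk_left x y)) (h y (Sym2.mem_mk_right x y))

variable {ι : Type*} [LinearOrder ι] {I : Finset ι} {T : Finset V} {e : ι → Sym2 V}

lemma two_mul_card_le_of_edgesDisjoint (hdiag : ∀ i ∈ I, ¬(e i).IsDiag)
    (hdisj : ∀ i ∈ I, ∀ j ∈ I, i < j → edgesDisjoint (e i) (e j))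
    (hT : ∀ i ∈ I, ∀ v ∈ e i, v ∈ T) : 2 * #I ≤ #T := by
  classical
  have hpair : (I : Set ι).PairwiseDisjoint fun i => (e i).toFinset := by
    intro i hi j hj hij
    simp only [Function.onFun, disjoint_left, Sym2.mem_toFinset]
    rcases hij.lt_or_gt with h | h
    · exact hdisj i hi j hj h
    · exact (hdisj j hj i hi h).symm
  calc 2 * #I = ∑ i ∈ I, #(e i).toFinset := by
        rw [sum_congr rfl fun i hi => Sym2.card_toFinset_of_not_isDiag _ (hdiag i hi), sum_const,
          smul_eq_mul, mul_comm]
    _ = #(I.biUnion fun i => (e i).toFinset) := (card_biUnion hpair).symm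
    _ ≤ #T := card_le_card <| biUnion_subset.2 fun i hi v hv => hT i hi v (Sym2.mem_toFinset.1 hv)

lemma exists_mem_of_edgesDisjoint (hdiag : ∀ i ∈ I, ¬(e i).IsDiag)
    (hdisj : ∀ i ∈ I, ∀ j ∈ I, i < j → edgesDisjoint (e i) (e j))
    (hT : ∀ i ∈ I, ∀ v ∈ e i, v ∈ T) (hcard : #T ≤ 2 * #I) {v : V} (hv : v ∈ T) :
    ∃ i ∈ I, v ∈ e i := by
  classical
  by_contra! h
  have : 2 * #I ≤ #(T.erase v) := two_mul_card_le_of_edgesDisjoint hdiag hdisj fun i hi w hw =>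
    mem_erase.2 ⟨fun hwv => h i hi (hwv ▸ hw), hT i hi w hw⟩
  have := card_erase_lt_of_mem hv
  omega

-- The last `k` edges cover `T`, and an endpoint of the first can only be covered by the last.
lemma eq_last_of_card_le {k : ℕ} {e : Fin (k + 1) → Sym2 V} (hdiag : ∀ i, ¬(e i).IsDiag)
    (hdisj : ∀ i j : Fin (k + 1), i < j → (j : ℕ) < i + k → edgesDisjoint (e i) (e j))
    (hT : ∀ i, ∀ v ∈ e i, v ∈ T) (hcard : #T ≤ 2 * k) : e 0 = e (Fin.last k) := by
  refine eq_of_not_isDiag_of_forall_mem (hdiag 0) fun v hv => ?_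
  obtain ⟨i, hi, hvi⟩ : ∃ i ∈ univ.erase (0 : Fin (k + 1)), v ∈ e i := by
    refine exists_mem_of_edgesDisjoint (fun i _ => hdiag i) (fun i hi j _ hij => ?_)
      (fun i _ => hT i) (by simpa using hcard) (hT 0 v hv)
    have := Fin.pos_iff_ne_zero.2 (ne_of_mem_erase hi)
    exact hdisj i j hij (by omega)
  have hi0 := Fin.pos_iff_ne_zero.2 (ne_of_mem_erase hi)
  rcases (Fin.le_last i).lt_or_eq with hlast | rfl
  · exact absurd hvi (hdisj 0 i hi0 (by simpa [Fin.lt_def] using hlast) v hv)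
  · exact hvi

end Edges

section Gaps

/-- `p` occurs with gaps `k` and `k + 1`: after an occurrence, the next one comes exactly `k` or
`k + 1` steps later. -/
structure HasGaps (p : ℕ → Prop) (k : ℕ) : Prop where
  add_le_of_lt : ∀ {s t}, p s → p t → s < t → s + k ≤ t
  recurs : ∀ {t}, p t → p (t + k) ∨ p (t + k + 1)

namespace HasGaps

variable {p q : ℕ → Prop} {k : ℕ}

lemma infinite (hp : HasGaps p k) (hk : 0 < k) (h0 : p 0) : (Set.ofPred p).Infinite := by
  refine Set.infinite_of_forall_exists_gt fun n => ?_
  induction n with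
  | zero => exact (hp.recurs h0).elim (⟨_, ·, by omega⟩) (⟨_, ·, by omega⟩)
  | succ n ih =>
    obtain ⟨t, ht, hnt⟩ := ih
    exact (hp.recurs ht).elim (⟨_, ·, by omega⟩) (⟨_, ·, by omega⟩)

lemma nth_add_le_nth_succ (hp : HasGaps p k) (hinf : (Set.ofPred p).Infinite) (j : ℕ) :
    Nat.nth p j + k ≤ Nat.nth p (j + 1) :=
  hp.add_le_of_lt (Nat.nth_mem_of_infinite hinf j) (Nat.nth_mem_of_infinite hinf (j + 1))
    (Nat.nth_strictMono hinf j.lt_succ_self)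

lemma nth_succ_le (hp : HasGaps p k) (hk : 0 < k) (hinf : (Set.ofPred p).Infinite) (j : ℕ) :
    Nat.nth p (j + 1) ≤ Nat.nth p j + k + 1 := by
  by_contra! hlt
  rcases hp.recurs (Nat.nth_mem_of_infinite hinf j) with h | h
  · have := Nat.le_nth_of_lt_nth_succ (k := j) (by omega) h
    omega
  · have := Nat.le_nth_of_lt_nth_succ hlt h
    omega

-- Whenever `p` is strictly ahead, `q` could only catch up by meeting `p`.
lemma nth_lt_nth (hp : HasGaps p k) (hq : HasGaps q k) (hk : 0 < k)
    (hpinf : (Set.ofPred p).Infinite) (hqinf : (Set.ofPred q).Infinite) (hp0 : p 0) (hq0 : q 0)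
    (hpk : p k) {D : ℕ} (hmeet : ∀ t, 0 < t → t < Nat.nth q D → p t → ¬q t) {j : ℕ} (hj : 1 ≤ j)
    (hjD : j < D) : Nat.nth p j < Nat.nth q j := by
  have hne {j : ℕ} (hj : 1 ≤ j) (hjD : j < D) : Nat.nth p j ≠ Nat.nth q j := fun h =>
    hmeet _ (by have := Nat.nth_strictMono hqinf hj; omega) (Nat.nth_strictMono hqinf hjD)
      (h ▸ Nat.nth_mem_of_infinite hpinf j) (Nat.nth_mem_of_infinite hqinf j)
  induction j, hj using Nat.le_induction with
  | base =>
    have hp1 : Nat.nth p 1 ≤ k := by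
      by_contra! hlt
      have := Nat.le_nth_of_lt_nth_succ hlt hpk
      rw [Nat.nth_zero_of_zero hp0] at this
      omega
    have hq1 := hq.nth_add_le_nth_succ hqinf 0
    rw [Nat.nth_zero_of_zero hq0, zero_add, zero_add] at hq1
    exact (hp1.trans hq1).lt_of_ne (hne le_rfl hjD)
  | succ j hj ih =>
    have hpj := hp.nth_succ_le hk hpinf j
    have hqj := hq.nth_add_le_nth_succ hqinf j
    have hlt := ih (by omega)
    exact (show Nat.nth p (j + 1) ≤ Nat.nth q (j + 1) by omega).lt_of_ne (hne (by omega) hjD)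

-- Otherwise the last occurrence of `q` before `m` would come after `t`, too close to `m`.
lemma not_of_count_eq [DecidablePred p] [DecidablePred q] (hp : HasGaps p k) (hq : HasGaps q k)
    (hk : 0 < k) (hp0 : p 0) (hq0 : q 0) (hpk : p k) {t m : ℕ} (ht : 0 < t) (htm : t + k = m)
    (hqm : q m) (hcount : Nat.count p m = Nat.count q m)
    (hmeet : ∀ s, 0 < s → s < m → p s → ¬q s) : ¬p t := by
  intro h
  have hpinf := hp.infinite hk hp0
  have hqinf := hq.infinite hk hq0
  have hqD : Nat.nth q (Nat.count p m) = m := hcount ▸ Nat.nth_count hqm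
  have hcount_pos : 0 < Nat.count p t := Nat.pos_of_ne_zero (Nat.count_ne_iff_exists.2 ⟨0, ht, hp0⟩)
  have hcount_lt : Nat.count p t < Nat.count p m := Nat.count_strict_mono h (by omega)
  have hahead : t < Nat.nth q (Nat.count p t) := by
    simpa only [Nat.nth_count h] using
      hp.nth_lt_nth hq hk hpinf hqinf hp0 hq0 hpk (by rwa [hqD]) hcount_pos hcount_lt
  have hgap := hq.nth_add_le_nth_succ hqinf (Nat.count p t)
  have hle : Nat.nth q (Nat.count p t + 1) ≤ m :=
    ((Nat.nth_strictMono hqinf).monotone hcount_lt).trans_eq hqD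
  omega

end HasGaps
end Gaps

section CyclicOrderings

variable {V : Type*} {G : SimpleGraph V} {N d : ℕ} {f : ZMod N ≃ G.edgeSet}

/-- The `i`-th edge of a cyclic ordering, indexed by `ℤ` instead of `ZMod N` so that positions can
be compared. -/
def edgeAt (f : ZMod N ≃ G.edgeSet) (i : ℤ) : Sym2 V := f (i : ZMod N)

lemma edgeAt_mem_edgeSet (f : ZMod N ≃ G.edgeSet) (i : ℤ) : edgeAt f i ∈ G.edgeSet := (f i).2

lemma not_isDiag_edgeAt (f : ZMod N ≃ G.edgeSet) (i : ℤ) : ¬(edgeAt f i).IsDiag :=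
  G.not_isDiag_of_mem_edgeSet (edgeAt_mem_edgeSet f i)

lemma edgeAt_add_period (f : ZMod N ≃ G.edgeSet) (i : ℤ) : edgeAt f (i + N) = edgeAt f i := by
  simp [edgeAt]

lemma edgeAt_eq_iff {i j : ℤ} : edgeAt f i = edgeAt f j ↔ (N : ℤ) ∣ j - i := by
  rw [edgeAt, edgeAt, Subtype.coe_inj, f.injective.eq_iff, ZMod.intCast_eq_intCast_iff_dvd_sub]

lemma edgeAt_ne {i j : ℤ} (hij : i < j) (hji : j < i + N) : edgeAt f i ≠ edgeAt f j := fun h => by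
  have := Int.le_of_dvd (by omega) (edgeAt_eq_iff.1 h)
  omega

lemma CyclicGood.edgesDisjoint_edgeAt (hf : CyclicGood G f d) {i j : ℤ} (hij : i < j)
    (hji : j < i + d) : edgesDisjoint (edgeAt f i) (edgeAt f j) := by
  obtain ⟨r, rfl⟩ := Int.le.dest hij.le
  simpa [edgeAt] using hf i 0 r (by omega) (by omega) (by omega)

lemma CyclicGood.add_le_of_mem (hf : CyclicGood G f d) {v : V} {i j : ℤ} (hij : i < j)
    (hvi : v ∈ edgeAt f i) (hvj : v ∈ edgeAt f j) : i + d ≤ j := by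
  by_contra! hji
  exact hf.edgesDisjoint_edgeAt hij hji v hvi hvj

lemma CyclicGood.mono {d' : ℕ} (hf : CyclicGood G f d) (h : d' ≤ d) : CyclicGood G f d' :=
  fun i j k hj hk => hf i j k (hj.trans_le h) (hk.trans_le h)

lemma count_mem_edgeAt [DecidableEq V] [G.LocallyFinite] [NeZero N]
    (f : ZMod N ≃ G.edgeSet) (v : V) (i : ℤ) :
    Nat.count (fun t : ℕ => v ∈ edgeAt f (i + t)) N = G.degree v := by
  rw [Nat.count_eq_card_filter_range, ← G.card_incidenceFinset_eq_degree]
  refine card_nbij (fun t : ℕ => edgeAt f (i + t)) (fun t ht => ?_) (fun s hs t ht hst => ?_)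
    fun z hz => ?_
  · exact (G.mem_incidenceFinset _ _).2 ⟨edgeAt_mem_edgeSet f _, (mem_filter.1 ht).2⟩
  · simp only [coe_filter, mem_range, Set.mem_ofPred_eq] at hs ht
    rcases lt_trichotomy s t with h | h | h
    · exact absurd hst (edgeAt_ne (by omega) (by omega))
    · exact h
    · exact absurd hst.symm (edgeAt_ne (by omega) (by omega))
  · obtain ⟨hzG, hvz⟩ := (G.mem_incidenceFinset _ _).1 hz
    obtain ⟨x, hx⟩ := f.surjective ⟨z, hzG⟩
    have hz' : edgeAt f (i + (x - i).val) = z := by simp [edgeAt, hx]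
    exact ⟨(x - i).val, mem_filter.2 ⟨mem_range.2 (ZMod.val_lt _), by rwa [hz']⟩, hz'⟩

end CyclicOrderings

section OddCyclic

variable {V : Type*} [Fintype V] {G : SimpleGraph V} {N k : ℕ} {f : ZMod N ≃ G.edgeSet}

namespace CyclicGood

-- If `v` is missed, the `k + 1` edges avoid `v` and so live on `2 * k` vertices.
lemma exists_mem_edgeAt (hf : CyclicGood G f k) (hV : Fintype.card V ≤ 2 * k + 1) (hk : 0 < k)
    (hkN : k < N) (v : V) (i : ℤ) : ∃ j, i ≤ j ∧ j ≤ i + k ∧ v ∈ edgeAt f j := by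
  classical
  by_contra! h
  refine edgeAt_ne (f := f) (i := i) (j := i + k) (by omega) (by omega) ?_
  simpa using eq_last_of_card_le (T := univ.erase v) (k := k)
    (e := fun t => edgeAt f (i + (t : ℕ))) (fun t => not_isDiag_edgeAt f _)
    (fun s t hst hts => hf.edgesDisjoint_edgeAt (by omega) (by omega))
    (fun t w hw => mem_erase.2 ⟨fun hwv => h _ (by omega) (by omega) (hwv ▸ hw), mem_univ w⟩)
    (by rw [card_erase_of_mem (mem_univ v), card_univ]; omega)

lemma mem_edgeAt_add_or (hf : CyclicGood G f k) (hV : Fintype.card V ≤ 2 * k + 1) (hk : 0 < k)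
    (hkN : k < N) {v : V} {i : ℤ} (hv : v ∈ edgeAt f i) :
    v ∈ edgeAt f (i + k) ∨ v ∈ edgeAt f (i + k + 1) := by
  obtain ⟨j, hij, hji, hvj⟩ := hf.exists_mem_edgeAt hV hk hkN v (i + 1)
  have := hf.add_le_of_mem (by omega) hv hvj
  obtain rfl | rfl : j = i + k ∨ j = i + k + 1 := by omega
  exacts [Or.inl hvj, Or.inr hvj]

lemma hasGaps (hf : CyclicGood G f k) (hV : Fintype.card V ≤ 2 * k + 1) (hk : 0 < k)
    (hkN : k < N) (v : V) (i : ℤ) : HasGaps (fun t : ℕ => v ∈ edgeAt f (i + t)) k where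
  add_le_of_lt hs ht hst := by
    have := hf.add_le_of_mem (by omega) hs ht
    omega
  recurs ht := by
    simpa only [Nat.cast_add, Nat.cast_one, add_assoc] using hf.mem_edgeAt_add_or hV hk hkN ht

-- Otherwise `k + 1` consecutive edges would be disjoint, on fewer than `2 * k + 2` vertices.
lemma exists_mem_edgeAt_add (hf : CyclicGood G f k) (hV : Fintype.card V ≤ 2 * k + 1) (i : ℤ) :
    ∃ v, v ∈ edgeAt f i ∧ v ∈ edgeAt f (i + k) := by
  by_contra! h
  have := two_mul_card_le_of_edgesDisjoint (I := Icc i (i + k)) (T := univ) (e := edgeAt f)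
    (fun j _ => not_isDiag_edgeAt f j)
    (fun a ha b hb hab => by
      rw [mem_Icc] at ha hb
      by_cases hba : b < a + k
      · exact hf.edgesDisjoint_edgeAt hab hba
      · obtain ⟨rfl, rfl⟩ : a = i ∧ b = i + k := by omega
        exact h)
    fun _ _ v _ => mem_univ v
  rw [Int.card_Icc, card_univ] at this
  omega

lemma notMem_edgeAt_add_two_mul {D : ℕ} [G.LocallyFinite] (hf : CyclicGood G f k)
    (hG : G.IsRegularOfDegree D) (hV : Fintype.card V ≤ 2 * k + 1) (hk : 0 < k) (hkN : k < N)
    {v : V} {i : ℤ} (hv : v ∈ edgeAt f i) (hvk : v ∈ edgeAt f (i + k)) :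
    v ∉ edgeAt f (i + 2 * k) := by
  classical
  have : NeZero N := ⟨by omega⟩
  intro hv2
  obtain ⟨w, hw, hwv⟩ : ∃ w, w ∈ edgeAt f (i + k) ∧ w ≠ v :=
    ⟨_, Sym2.other_mem hvk, Sym2.other_ne (not_isDiag_edgeAt f _) hvk⟩
  refine (hf.hasGaps hV hk hkN v (i + k)).not_of_count_eq (hf.hasGaps hV hk hkN w (i + k)) hk
    (by simpa using hvk) (by simpa using hw) (by rwa [add_assoc, ← two_mul]) (t := N - k)
    (by omega) (Nat.sub_add_cancel hkN.le) (by rwa [edgeAt_add_period]) ?_ ?_ ?_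
  · rw [count_mem_edgeAt, count_mem_edgeAt, hG v, hG w]
  · intro s hs hsN hvs hws
    exact edgeAt_ne (f := f) (i := i + k) (j := i + k + s) (by omega) (by omega)
      (Sym2.eq_of_ne_mem hwv hw hvk hws hvs)
  · have hcast : i + k + ((N - k : ℕ) : ℤ) = i + N := by omega
    rwa [hcast, edgeAt_add_period]

lemma mem_edgeAt_add_two_mul_add_one {D : ℕ} [G.LocallyFinite] (hf : CyclicGood G f k)
    (hG : G.IsRegularOfDegree D) (hV : Fintype.card V ≤ 2 * k + 1) (hk : 2 ≤ k) (hkN : k < N)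
    {v : V} {i : ℤ} (hv : v ∈ edgeAt f i) : v ∈ edgeAt f (i + (2 * k + 1)) := by
  have hshort {u : V} {j : ℤ} (hu : u ∈ edgeAt f j) (huk : u ∈ edgeAt f (j + k)) :
      u ∉ edgeAt f (j + 2 * k) := hf.notMem_edgeAt_add_two_mul hG hV (by omega) hkN hu huk
  rcases hf.mem_edgeAt_add_or hV (by omega) hkN hv with hvk | hvk
  · have := (hf.mem_edgeAt_add_or hV (by omega) hkN hvk).resolve_left
      (by rw [add_assoc, ← two_mul]; exact hshort hv hvk)
    rwa [show i + k + k + 1 = i + (2 * k + 1) by ring] at this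
  · have hv1 : v ∉ edgeAt f (i + 1) := fun h => by
      have := hf.add_le_of_mem (by omega) hv h
      omega
    obtain ⟨w, hw, hwk⟩ := hf.exists_mem_edgeAt_add hV (i + 1)
    obtain ⟨x, hx, hxk⟩ := hf.exists_mem_edgeAt_add hV (i + k + 1)
    rw [add_right_comm] at hwk
    rw [show i + k + 1 + k = i + 1 + 2 * k by ring] at hxk
    have hxw : x ≠ w := fun h => hshort hw (by rwa [add_right_comm]) (h ▸ hxk)
    obtain rfl : x = v := by
      have hwv : w ≠ v := fun h => hv1 (h ▸ hw)
      have hedge : edgeAt f (i + k + 1) = s(w, v) := (Sym2.mem_and_mem_iff hwv).1 ⟨hwk, hvk⟩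
      exact (Sym2.mem_iff.1 (hedge ▸ hx)).resolve_left hxw
    rwa [show i + 1 + 2 * k = i + (2 * k + 1) by ring] at hxk

theorem lt_of_isRegularOfDegree {D : ℕ} [G.LocallyFinite] {d : ℕ}
    (hf : CyclicGood G f d) (hG : G.IsRegularOfDegree D) (hV : Fintype.card V ≤ 2 * k + 1)
    (hk : 2 ≤ k) (hkN : 2 * k + 1 < N) : d < k := by
  by_contra! hkd
  refine edgeAt_ne (f := f) (i := 0) (j := 0 + (2 * k + 1)) (by omega) (by omega) <|
    eq_of_not_isDiag_of_forall_mem (not_isDiag_edgeAt f 0) fun v hv =>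
      (hf.mono hkd).mem_edgeAt_add_two_mul_add_one hG hV hk (by omega) hv

end CyclicGood
end OddCyclic

section LinearOrderings

variable {V : Type*} {G : SimpleGraph V} {d : ℕ}

lemma LinearGood.mono {f : Fin (edgeCount G) ≃ G.edgeSet} {d' : ℕ} (hf : LinearGood G f d)
    (h : d' ≤ d) : LinearGood G f d' :=
  fun i j hij hi hj => hf i j hij (by omega) (by omega)

lemma LinearGood.two_mul_lt_card_of_lt {f : Fin (edgeCount G) ≃ G.edgeSet} [Fintype V]
    (hf : LinearGood G f d) (hd0 : 0 < d) (hd : d < edgeCount G) : 2 * d < Fintype.card V := by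
  by_contra! h
  have hlast : (f (Fin.castLE hd 0) : Sym2 V) = f (Fin.castLE hd (Fin.last d)) :=
    eq_last_of_card_le (T := univ) (e := fun i => (f (Fin.castLE hd i) : Sym2 V))
      (fun i => G.not_isDiag_of_mem_edgeSet (f _).2)
      (fun i j hij hji => hf _ _ (by simpa [Fin.ext_iff] using Fin.val_ne_of_ne hij.ne)
        (by simp only [Fin.val_castLE]; omega) (by simpa using hji))
      (fun i v _ => mem_univ v) (by simpa using h)
  have := congrArg Fin.val (f.injective (Subtype.ext hlast))
  simp only [Fin.val_castLE, Fin.val_zero, Fin.val_last] at this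
  omega

lemma LinearGood.two_mul_lt_card {f : Fin (edgeCount G) ≃ G.edgeSet} [Fintype V]
    (hf : LinearGood G f d) (hV : Fintype.card V < edgeCount G) : 2 * d < Fintype.card V := by
  by_contra! h
  obtain ⟨v⟩ : Nonempty V := ⟨(Quot.out (f ⟨0, by omega⟩ : Sym2 V)).1⟩
  have hpos : 0 < Fintype.card V := Fintype.card_pos_iff.2 ⟨v⟩
  have := (hf.mono (d' := (Fintype.card V + 1) / 2) (by omega)).two_mul_lt_card_of_lt
    (by omega) (by omega)
  omega

open scoped Fin.CommRing in
lemma CyclicGood.exists_linearGood [NeZero (edgeCount G)] {f : ZMod (edgeCount G) ≃ G.edgeSet}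
    (hf : CyclicGood G f d) : ∃ g : Fin (edgeCount G) ≃ G.edgeSet, LinearGood G g d := by
  refine ⟨(ZMod.finEquiv (edgeCount G)).toEquiv.trans f, fun i j hij hji hjd => ?_⟩
  have hval (i : Fin (edgeCount G)) : (f (ZMod.finEquiv _ i) : Sym2 V) = edgeAt f (i : ℕ) := by
    rw [edgeAt, Int.cast_natCast, ← map_natCast (ZMod.finEquiv (edgeCount G)), Fin.cast_val_eq_self]
  simp only [Equiv.trans_apply, RingEquiv.toEquiv_eq_coe, EquivLike.coe_coe, hval]
  rcases hij.lt_or_gt with h | h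
  · exact hf.edgesDisjoint_edgeAt (by omega) (by omega)
  · exact (hf.edgesDisjoint_edgeAt (by omega) (by omega)).symm

end LinearOrderings

section BlockOrderings

variable {V W : Type*} {G : SimpleGraph V} {H : SimpleGraph W} {e : ℕ → ℕ → Sym2 V} {M B d : ℕ}

/-- Edges of `G` are listed in consecutive blocks of length `B`, `e c r` being the `r`-th edge of
block `c`, such that the blocks `c < M` have no repetitions and any `d` consecutive edges are
pairwise disjoint. Disjointness is imposed beyond block `M` so that a periodic list can be read
cyclically. -/
structure IsBlockOrdering (G : SimpleGraph V) (e : ℕ → ℕ → Sym2 V) (M B d : ℕ) : Prop where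
  le_length : d ≤ B
  mem_edgeSet : ∀ c {r}, r < B → e c r ∈ G.edgeSet
  injOn : ∀ {c c' r s}, c < M → c' < M → r < B → s < B → e c r = e c' s → c = c' ∧ r = s
  disjoint_same : ∀ c {r s}, r < s → s < B → s < r + d → edgesDisjoint (e c r) (e c s)
  disjoint_succ : ∀ c {r s}, r < B → s + B < r + d → edgesDisjoint (e c r) (e (c + 1) s)

/-- The list of edges obtained by concatenating blocks of length `B`. -/
def blockSeq (e : ℕ → ℕ → Sym2 V) (B t : ℕ) : Sym2 V := e (t / B) (t % B)

lemma blockSeq_periodic (he : ∀ c r, e (c + M) r = e c r) (hB : 0 < B) :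
    Function.Periodic (blockSeq e B) (M * B) := fun t => by
  simp only [blockSeq, Nat.add_mul_div_right _ _ hB, Nat.add_mul_mod_self_right, he]

namespace IsBlockOrdering

lemma map (he : IsBlockOrdering G e M B d) (φ : G ≃g H) :
    IsBlockOrdering H (fun c r => (e c r).map φ) M B d where
  le_length := he.le_length
  mem_edgeSet c _ hr := φ.map_mem_edgeSet_iff.2 (he.mem_edgeSet c hr)
  injOn hc hc' hr hs h := he.injOn hc hc' hr hs (Sym2.map.injective φ.injective h)
  disjoint_same c _ _ hrs hs hsr :=
    (edgesDisjoint_map φ.injective).2 (he.disjoint_same c hrs hs hsr)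
  disjoint_succ c _ _ hr hs := (edgesDisjoint_map φ.injective).2 (he.disjoint_succ c hr hs)

lemma blockSeq_mem_edgeSet (he : IsBlockOrdering G e M B d) (hB : 0 < B) (t : ℕ) :
    blockSeq e B t ∈ G.edgeSet :=
  he.mem_edgeSet _ (Nat.mod_lt t hB)

lemma eq_of_blockSeq_eq (he : IsBlockOrdering G e M B d) {s t : ℕ} (hs : s < M * B)
    (ht : t < M * B) (h : blockSeq e B s = blockSeq e B t) : s = t := by
  have hB : 0 < B := Nat.pos_of_mul_pos_left (by omega : 0 < M * B)
  obtain ⟨hdiv, hmod⟩ := he.injOn (Nat.div_lt_of_lt_mul (by rwa [mul_comm]))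
    (Nat.div_lt_of_lt_mul (by rwa [mul_comm])) (Nat.mod_lt s hB) (Nat.mod_lt t hB) h
  rw [← Nat.div_add_mod s B, ← Nat.div_add_mod t B, hdiv, hmod]

lemma edgesDisjoint_blockSeq (he : IsBlockOrdering G e M B d) {s t : ℕ} (hst : s < t)
    (hts : t < s + d) : edgesDisjoint (blockSeq e B s) (blockSeq e B t) := by
  have hd := he.le_length
  have hB : 0 < B := by omega
  have hs := Nat.div_add_mod s B
  have ht := Nat.div_add_mod t B
  have hsB := Nat.mod_lt s hB
  have hle : s / B ≤ t / B := Nat.div_le_div_right hst.le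
  have hlt : t / B < s / B + 2 := by
    rw [Nat.div_lt_iff_lt_mul hB, add_mul, mul_comm (s / B)]
    omega
  obtain h | h : t / B = s / B ∨ t / B = s / B + 1 := by omega
  · rw [h] at ht
    rw [blockSeq, blockSeq, h]
    exact he.disjoint_same _ (by omega) (Nat.mod_lt t hB) (by omega)
  · rw [h, mul_add, mul_one] at ht
    rw [blockSeq, blockSeq, h]
    exact he.disjoint_succ _ hsB (by omega)

lemma exists_linearGood [Finite G.edgeSet] (he : IsBlockOrdering G e M B d)
    (hG : edgeCount G = M * B) :
    ∃ f : Fin (edgeCount G) ≃ G.edgeSet, LinearGood G f d := by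
  let f (i : Fin (edgeCount G)) : G.edgeSet :=
    ⟨blockSeq e B i, he.blockSeq_mem_edgeSet (Nat.pos_of_mul_pos_left (hG ▸ i.pos)) i⟩
  have hf : f.Injective := fun i j hij => Fin.ext <|
    he.eq_of_blockSeq_eq (hG ▸ i.2) (hG ▸ j.2) (congrArg Subtype.val hij)
  refine ⟨.ofBijective f (hf.bijective_of_nat_card_le (Nat.card_fin _).ge),
    fun i j hij hji hjd => ?_⟩
  rcases hij.lt_or_gt with h | h
  · exact he.edgesDisjoint_blockSeq h hjd
  · exact (he.edgesDisjoint_blockSeq h hji).symm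

lemma exists_cyclicGood [NeZero (edgeCount G)] (he : IsBlockOrdering G e M B d)
    (hper : ∀ c r, e (c + M) r = e c r) (hG : edgeCount G = M * B) :
    ∃ f : ZMod (edgeCount G) ≃ G.edgeSet, CyclicGood G f d := by
  have : Finite G.edgeSet := Nat.finite_of_card_ne_zero (NeZero.ne (edgeCount G))
  have hB : 0 < B := Nat.pos_of_mul_pos_left (hG ▸ NeZero.pos (edgeCount G))
  let f (x : ZMod (edgeCount G)) : G.edgeSet :=
    ⟨blockSeq e B x.val, he.blockSeq_mem_edgeSet hB x.val⟩
  have hf : f.Injective := fun x y hxy => ZMod.val_injective _ <|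
    he.eq_of_blockSeq_eq (hG ▸ x.val_lt) (hG ▸ y.val_lt) (congrArg Subtype.val hxy)
  have hadd (x : ZMod (edgeCount G)) (j : ℕ) : (f (x + j) : Sym2 V) = blockSeq e B (x.val + j) := by
    simp only [f, ZMod.val_add, ZMod.val_natCast, Nat.add_mod_mod, hG]
    exact (blockSeq_periodic hper hB).map_mod_nat _
  refine ⟨.ofBijective f (hf.bijective_of_nat_card_le (Nat.card_zmod _).ge),
    fun x j k hj hk hjk => ?_⟩
  simp only [Equiv.ofBijective_apply, hadd]
  rcases hjk.lt_or_gt with h | h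
  · exact he.edgesDisjoint_blockSeq (by omega) (by omega)
  · exact (he.edgesDisjoint_blockSeq (by omega) (by omega)).symm

end IsBlockOrdering
end BlockOrderings

section Cone

variable {α : Type*} [DecidableEq α]

/-- The edge of the complete graph on `Option α` corresponding to a pair in `α`: a pair `s(x, x)`
becomes the edge joining `x` to the additional vertex `none`. -/
def coneEdge : Sym2 α → Sym2 (Option α) :=
  Sym2.lift ⟨fun x y => s(if x = y then none else some x, some y), fun x y => by
    rcases eq_or_ne x y with rfl | h
    · rfl
    · simp only [if_neg h, if_neg h.symm, Sym2.eq_swap]⟩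

lemma coneEdge_mk (x y : α) : coneEdge s(x, y) = s(if x = y then none else some x, some y) := rfl

lemma not_isDiag_coneEdge (z : Sym2 α) : ¬(coneEdge z).IsDiag := by
  induction z with
  | h x y => by_cases h : x = y <;> simp [coneEdge_mk, h]

lemma coneEdge_injective : (coneEdge : Sym2 α → Sym2 (Option α)).Injective := by
  intro z w
  induction z, w using Sym2.inductionOn₂ with
  | hf x y z w => by_cases h : x = y <;> by_cases h' : z = w <;> simp [coneEdge_mk, h, h']

lemma edgesDisjoint_coneEdge {z w : Sym2 α} (h : edgesDisjoint z w) (hzw : ¬z.IsDiag ∨ ¬w.IsDiag) :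
    edgesDisjoint (coneEdge z) (coneEdge w) := by
  induction z, w using Sym2.inductionOn₂ with
  | hf x y z w =>
    simp only [edgesDisjoint_mk, coneEdge_mk, Sym2.mk_isDiag_iff] at h hzw ⊢
    by_cases hxy : x = y <;> by_cases hzw' : z = w <;> simp_all

end Cone

section Chords

variable {p k : ℕ} {a b x y : ℤ}

lemma eq_or_eq_add_or_eq_add (h : (a : ZMod p) = b) (hab : a < b + 2 * p) (hba : b < a + 2 * p) :
    a = b ∨ a = b + p ∨ b = a + p := by
  obtain ⟨m, hm⟩ := (ZMod.intCast_eq_intCast_iff_dvd_sub a b p).1 h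
  have hm1 : m < 2 := by nlinarith
  have hm2 : -2 < m := by nlinarith
  obtain rfl | rfl | rfl : m = -1 ∨ m = 0 ∨ m = 1 := by omega
  all_goals omega

lemma intCast_ne_intCast (hab : a < b) (hba : b < a + p) : (a : ZMod p) ≠ b := fun h => by
  have := eq_or_eq_add_or_eq_add h (by omega) (by omega)
  omega

/-- The pair of residues `a` and `b` modulo `p`, i.e. a chord of the `p`-cycle. Integer
representatives let residues be compared by linear arithmetic. -/
def chord (p : ℕ) (a b : ℤ) : Sym2 (ZMod p) := s((a : ZMod p), (b : ZMod p))

lemma chord_add_period : chord p (a + p) (b + p) = chord p a b := by simp [chord]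

lemma not_isDiag_chord (hab : a < b) (hba : b < a + p) : ¬(chord p a b).IsDiag :=
  intCast_ne_intCast hab hba

lemma edgesDisjoint_chord (hxa : x < a) (hab : a ≤ b) (hby : b < y) (hyx : y ≤ x + p) :
    edgesDisjoint (chord p a b) (chord p x y) :=
  edgesDisjoint_mk.2 ⟨(intCast_ne_intCast hxa (by omega)).symm,
    intCast_ne_intCast (by omega) (by omega), (intCast_ne_intCast (by omega) (by omega)).symm,
    intCast_ne_intCast hby (by omega)⟩

lemma edgesDisjoint_coneEdge_chord (hxa : x < a) (hab : a ≤ b) (hby : b < y) (hyx : y ≤ x + p)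
    (h : a < b ∨ y < x + p) :
    edgesDisjoint (coneEdge (chord p a b)) (coneEdge (chord p x y)) :=
  edgesDisjoint_coneEdge (edgesDisjoint_chord hxa hab hby hyx) <| h.imp
    (not_isDiag_chord · (by omega)) (not_isDiag_chord (by omega))

lemma chord_inj_odd {c c' r s : ℕ} (hc : c < 2 * k + 1) (hc' : c' < 2 * k + 1) (hr : r ≤ k)
    (hs : s ≤ k) (h : chord (2 * k + 1) (c - r) (c + r) = chord (2 * k + 1) (c' - s) (c' + s)) :
    c = c' ∧ r = s := by
  rcases Sym2.eq_iff.1 h with ⟨h1, h2⟩ | ⟨h1, h2⟩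
  all_goals
    have := eq_or_eq_add_or_eq_add h1 (by omega) (by omega)
    have := eq_or_eq_add_or_eq_add h2 (by omega) (by omega)
    omega

end Chords

section Constructions

lemma isBlockOrdering_chord (k : ℕ) :
    IsBlockOrdering (⊤ : SimpleGraph (ZMod (2 * k + 3)))
      (fun c r => chord (2 * k + 3) (c - (r + 1 : ℕ)) (c + (r + 1 : ℕ))) (2 * k + 3) (k + 1) k where
  le_length := k.le_succ
  mem_edgeSet c r hr := by
    simpa using not_isDiag_chord (p := 2 * k + 3) (by omega) (by omega)
  injOn hc hc' hr hs h := by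
    have := chord_inj_odd (k := k + 1) hc hc' (by omega) (by omega) h
    omega
  disjoint_same c r s hrs hs _ :=
    edgesDisjoint_chord (by omega) (by omega) (by omega) (by omega)
  disjoint_succ c r s hr hs :=
    (edgesDisjoint_chord (by omega) (by omega) (by omega) (by omega)).symm

lemma isBlockOrdering_coneEdge_chord (k : ℕ) :
    IsBlockOrdering (⊤ : SimpleGraph (Option (ZMod (2 * k + 1))))
      (fun c r => coneEdge (chord (2 * k + 1) (c - r) (c + r))) (2 * k + 1) (k + 1) k where
  le_length := k.le_succ
  mem_edgeSet _ _ _ := by simpa using not_isDiag_coneEdge _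
  injOn hc hc' hr hs h :=
    chord_inj_odd hc hc' (by omega) (by omega) (coneEdge_injective h)
  disjoint_same c r s hrs hs _ :=
    edgesDisjoint_coneEdge_chord (by omega) (by omega) (by omega) (by omega) (by omega)
  disjoint_succ c r s hr hs :=
    (edgesDisjoint_coneEdge_chord (by omega) (by omega) (by omega) (by omega) (by omega)).symm

/-- Walecki's Hamiltonian decomposition of the complete graph on `2 * k + 1` vertices: the edges
of block `c` form a zigzag Hamiltonian cycle through `none`, rotated by `c`, and are listed by going
around that cycle in steps of two edges. -/
def waleckiEdge (k c r : ℕ) : Sym2 (Option (ZMod (2 * k))) :=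
  coneEdge <| if r ≤ k then chord (2 * k) (c - r) (c + r)
    else chord (2 * k) (c - (r - k) + 1) (c + (r - k))

lemma isBlockOrdering_waleckiEdge (k : ℕ) :
    IsBlockOrdering (⊤ : SimpleGraph (Option (ZMod (2 * k)))) (waleckiEdge k) k (2 * k + 1) k where
  le_length := by omega
  mem_edgeSet _ _ _ := by simpa [waleckiEdge] using not_isDiag_coneEdge _
  injOn hc hc' hr hs h := by
    have h := coneEdge_injective h
    split_ifs at h
    all_goals
      rcases Sym2.eq_iff.1 h with ⟨h1, h2⟩ | ⟨h1, h2⟩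
      all_goals
        have := eq_or_eq_add_or_eq_add h1 (by omega) (by omega)
        have := eq_or_eq_add_or_eq_add h2 (by omega) (by omega)
        omega
  disjoint_same c r s hrs hs hsr := by
    rw [waleckiEdge, waleckiEdge]
    split_ifs
    · exact edgesDisjoint_coneEdge_chord (by omega) (by omega) (by omega) (by omega) (by omega)
    · exact (edgesDisjoint_coneEdge_chord (by omega) (by omega) (by omega) (by omega)
        (by omega)).symm
    · omega
    · exact edgesDisjoint_coneEdge_chord (by omega) (by omega) (by omega) (by omega) (by omega)
  disjoint_succ c r s hr hs := by
    rw [waleckiEdge, waleckiEdge, if_neg (by omega), if_pos (by omega)]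
    exact (edgesDisjoint_coneEdge_chord (by omega) (by omega) (by omega) (by omega)
      (by omega)).symm

end Constructions

section CompleteGraph

variable {V : Type*} [Fintype V]

lemma two_mul_edgeCount_top {n : ℕ} (hV : Fintype.card V = n + 1) :
    2 * edgeCount (⊤ : SimpleGraph V) = (n + 1) * n := by
  classical
  rw [edgeCount, Nat.card_eq_fintype_card, ← SimpleGraph.edgeFinset_card,
    SimpleGraph.card_edgeFinset_top_eq_card_choose_two, hV, mul_comm, ← Nat.add_one_mul_choose_eq,
    Nat.choose_one_right]

lemma card_lt_edgeCount_top (hV : 4 ≤ Fintype.card V) :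
    Fintype.card V < edgeCount (⊤ : SimpleGraph V) := by
  obtain ⟨m, hm⟩ := Nat.exists_eq_add_of_le hV
  have := two_mul_edgeCount_top (V := V) (n := m + 3) (by omega)
  nlinarith

lemma neZero_edgeCount_top (hV : 2 ≤ Fintype.card V) :
    NeZero (edgeCount (⊤ : SimpleGraph V)) := by
  obtain ⟨m, hm⟩ := Nat.exists_eq_add_of_le hV
  have := two_mul_edgeCount_top (V := V) (n := m + 1) (by omega)
  exact ⟨by nlinarith⟩

lemma exists_cyclicGood_top (hV : 2 ≤ Fintype.card V) :
    ∃ f : ZMod (edgeCount (⊤ : SimpleGraph V)) ≃ (⊤ : SimpleGraph V).edgeSet,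
      CyclicGood ⊤ f (Fintype.card V / 2 - 1) := by
  have := neZero_edgeCount_top hV
  obtain ⟨k, hk | hk⟩ : ∃ k, Fintype.card V = 2 * k + 2 ∨ Fintype.card V = 2 * k + 3 :=
    ⟨Fintype.card V / 2 - 1, by omega⟩
  · obtain ⟨φ⟩ : Nonempty (Option (ZMod (2 * k + 1)) ≃ V) := Fintype.card_eq.1 <| by
      rw [Fintype.card_option, ZMod.card, hk]
    rw [show Fintype.card V / 2 - 1 = k by omega]
    refine ((isBlockOrdering_coneEdge_chord k).map (.completeGraph φ)).exists_cyclicGood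
      (fun c r => ?_) ?_
    · rw [Nat.cast_add, add_sub_right_comm, add_right_comm, chord_add_period]
    · have := two_mul_edgeCount_top hk
      linarith
  · obtain ⟨φ⟩ : Nonempty (ZMod (2 * k + 3) ≃ V) := Fintype.card_eq.1 <| by rw [ZMod.card, hk]
    rw [show Fintype.card V / 2 - 1 = k by omega]
    refine ((isBlockOrdering_chord k).map (.completeGraph φ)).exists_cyclicGood
      (fun c r => ?_) ?_
    · rw [Nat.cast_add, add_sub_right_comm, add_right_comm, chord_add_period]
    · have := two_mul_edgeCount_top hk
      linarith

lemma exists_linearGood_top (hV : 2 ≤ Fintype.card V) :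
    ∃ f : Fin (edgeCount (⊤ : SimpleGraph V)) ≃ (⊤ : SimpleGraph V).edgeSet,
      LinearGood ⊤ f ((Fintype.card V - 1) / 2) := by
  obtain ⟨k, hk | hk⟩ : ∃ k, Fintype.card V = 2 * k + 2 ∨ Fintype.card V = 2 * k + 1 :=
    ⟨(Fintype.card V - 1) / 2, by omega⟩
  · have := neZero_edgeCount_top hV
    obtain ⟨f, hf⟩ := exists_cyclicGood_top hV
    rw [show (Fintype.card V - 1) / 2 = Fintype.card V / 2 - 1 by omega]
    exact hf.exists_linearGood
  · have : NeZero (2 * k) := ⟨by omega⟩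
    obtain ⟨φ⟩ : Nonempty (Option (ZMod (2 * k)) ≃ V) := Fintype.card_eq.1 <| by
      rw [Fintype.card_option, ZMod.card, hk]
    rw [show (Fintype.card V - 1) / 2 = k by omega]
    refine ((isBlockOrdering_waleckiEdge k).map (.completeGraph φ)).exists_linearGood ?_
    have := two_mul_edgeCount_top hk
    linarith

theorem ms_top (hV : 4 ≤ Fintype.card V) : ms (⊤ : SimpleGraph V) = (Fintype.card V - 1) / 2 := by
  have hcard := card_lt_edgeCount_top hV
  refine IsGreatest.csSup_eq ⟨⟨by omega, exists_linearGood_top (by omega)⟩, ?_⟩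
  rintro d ⟨-, f, hf⟩
  have := hf.two_mul_lt_card hcard
  omega

theorem cms_top (hV : 4 ≤ Fintype.card V) : cms (⊤ : SimpleGraph V) = Fintype.card V / 2 - 1 := by
  classical
  have hcard := card_lt_edgeCount_top hV
  have := neZero_edgeCount_top (V := V) (by omega)
  refine IsGreatest.csSup_eq ⟨exists_cyclicGood_top (by omega), ?_⟩
  rintro d ⟨f, hf⟩
  rcases Nat.even_or_odd' (Fintype.card V) with ⟨k, hk | hk⟩
  · obtain ⟨g, hg⟩ := hf.exists_linearGood
    have := hg.two_mul_lt_card hcard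
    omega
  · have := hf.lt_of_isRegularOfDegree SimpleGraph.IsRegularOfDegree.top hk.le (by omega) (by omega)
    omega

end CompleteGraph

/-- For every integer `n ≥ 4`, `cms (K_n) = ms (K_n)` if `n` is even,
and `cms (K_n) = ms (K_n) - 1` if `n` is odd. -/
theorem cms_eq_ms_completeGraph (n : ℕ) (hn : 4 ≤ n) :
    cms (⊤ : SimpleGraph (Fin n)) =
      if Even n then ms (⊤ : SimpleGraph (Fin n)) else ms (⊤ : SimpleGraph (Fin n)) - 1 := by
  have hcard : 4 ≤ Fintype.card (Fin n) := by rwa [Fintype.card_fin]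
  rw [cms_top hcard, ms_top hcard, Fintype.card_fin]
  split_ifs with h
  · obtain ⟨k, rfl⟩ := h
    omega
  · obtain ⟨k, rfl⟩ := Nat.not_even_iff_odd.1 h
    omega
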